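/- Suppose the control sequence u = (u_0, …, u_{N−1}) is feasible from x, i.e., x̄_i ∈ X for i = 0, …, N−1, u_i ∈ U for i = 0, …, N−1, and x̄_N ∈ X_f. Then the shifted sequence u′ = (u_1, …, u_{N−1}, κ(x̄_N)) is feasible from the successor state x⁺ = f(x, u_0): its predicted states x̄_1, …, x̄_N lie in X, all its inputs lie in U, and its terminal state f(x̄_N, κ(x̄_N)) lies in X_f. -/

import Mathlib

/-!
Up to time `N - 1` the shifted inputs, started at `f x (u 0)`, reproduce the original trajectory
one step ahead (`mpcTraj_shift`), so the new states are `x̄_1, …, x̄_N`; the last of these lies in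
the terminal set, hence in the state constraint set. The new terminal state is
`f x̄_N (κ x̄_N)`, and since `Q` and `R` are positive semidefinite the Lyapunov decrease condition
shows that `zᵀ P z` does not increase along this step, so the terminal set is not left.
-/

open Matrix

/-- Predicted trajectory of the discrete-time system `x⁺ = f(x,u)`:
`x̄_0 = x`, `x̄_{i+1} = f(x̄_i, u_i)`. -/
def mpcTraj {n m : ℕ} (f : (Fin n → ℝ) → (Fin m → ℝ) → (Fin n → ℝ))
    (x : Fin n → ℝ) (u : ℕ → Fin m → ℝ) : ℕ → Fin n → ℝ
  | 0 => x
  | i + 1 => f (mpcTraj f x u i) (u i)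

/-- A control sequence `v` that agrees with the shift of `u` before time `i` steers `f x (u 0)`
along the trajectory of `u`, one step ahead, up to and including time `i`. -/
theorem mpcTraj_shift {n m : ℕ} (f : (Fin n → ℝ) → (Fin m → ℝ) → (Fin n → ℝ))
    (x : Fin n → ℝ) (u v : ℕ → Fin m → ℝ) (i : ℕ) (h : ∀ j < i, v j = u (j + 1)) :
    mpcTraj f (f x (u 0)) v i = mpcTraj f x u (i + 1) := by
  induction i with
  | zero => rfl
  | succ k ih =>
    rw [mpcTraj, ih fun j hj => h j (by omega), h k (by omega)]
    rfl

/-- **Recursive feasibility** (proof of Theorem 2): if `u = (u_0,…,u_{N−1})` is feasible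
from `x` — predicted states in `X = {x : g(x) ≤ 0}`, inputs in
`U = {u : u_min ≤ u ≤ u_max}`, terminal state in `X_f = {x : xᵀ P x ≤ α} ⊆ X` —
and the terminal law `κ` satisfies the terminal Lyapunov decrease condition and maps
`X_f` into `U`, then the shifted sequence `u' = (u_1,…,u_{N−1},κ(x̄_N))` is feasible
from the successor state `x⁺ = f(x,u_0)`: its predicted states `x̄_1,…,x̄_N` lie in `X`,
all of its inputs lie in `U`, and its terminal state `f(x̄_N, κ(x̄_N))` lies in `X_f`. -/
theorem mpc_recursive_feasibility {n m p N : ℕ} (hN : 1 ≤ N)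
    (f : (Fin n → ℝ) → (Fin m → ℝ) → (Fin n → ℝ))
    (Q P : Matrix (Fin n) (Fin n) ℝ) (R : Matrix (Fin m) (Fin m) ℝ)
    (hQ : Q.PosSemidef) (hR : R.PosSemidef) (hP : P.PosSemidef)
    (g : (Fin n → ℝ) → (Fin p → ℝ)) (umin umax : Fin m → ℝ)
    (α : ℝ) (hα : 0 ≤ α)
    (hXfX : ∀ z : Fin n → ℝ, z ⬝ᵥ P *ᵥ z ≤ α → g z ≤ 0)
    (κ : (Fin n → ℝ) → (Fin m → ℝ))
    (hκ : ∀ z : Fin n → ℝ, z ⬝ᵥ P *ᵥ z ≤ α →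
      f z (κ z) ⬝ᵥ P *ᵥ f z (κ z) - z ⬝ᵥ P *ᵥ z
        ≤ -(z ⬝ᵥ Q *ᵥ z + κ z ⬝ᵥ R *ᵥ κ z))
    (hκU : ∀ z : Fin n → ℝ, z ⬝ᵥ P *ᵥ z ≤ α → umin ≤ κ z ∧ κ z ≤ umax)
    (x : Fin n → ℝ) (u : ℕ → Fin m → ℝ)
    (hstate : ∀ i < N, g (mpcTraj f x u i) ≤ 0)
    (hinput : ∀ i < N, umin ≤ u i ∧ u i ≤ umax)
    (hterm : mpcTraj f x u N ⬝ᵥ P *ᵥ mpcTraj f x u N ≤ α) :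
    (∀ i < N,
        g (mpcTraj f (f x (u 0))
            (fun j => if j + 1 < N then u (j + 1) else κ (mpcTraj f x u N)) i) ≤ 0) ∧
    (∀ i < N,
        umin ≤ (fun j => if j + 1 < N then u (j + 1) else κ (mpcTraj f x u N)) i ∧
          (fun j => if j + 1 < N then u (j + 1) else κ (mpcTraj f x u N)) i ≤ umax) ∧
    (mpcTraj f (f x (u 0))
          (fun j => if j + 1 < N then u (j + 1) else κ (mpcTraj f x u N)) N ⬝ᵥ
        P *ᵥ
        mpcTraj f (f x (u 0))
          (fun j => if j + 1 < N then u (j + 1) else κ (mpcTraj f x u N)) N) ≤ α := by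
  have hshift : ∀ i < N, mpcTraj f (f x (u 0))
      (fun j => if j + 1 < N then u (j + 1) else κ (mpcTraj f x u N)) i
        = mpcTraj f x u (i + 1) := fun i hi =>
    mpcTraj_shift f x u _ i fun j hj => if_pos (by omega)
  refine ⟨fun i hi => ?_, fun i hi => ?_, ?_⟩
  · rw [hshift i hi]
    rcases Nat.lt_or_ge (i + 1) N with h | h
    · exact hstate _ h
    · obtain rfl : i + 1 = N := by omega
      exact hXfX _ hterm
  · dsimp only
    split_ifs with h
    · exact hinput _ h
    · exact hκU _ hterm
  · have hlast : mpcTraj f (f x (u 0))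
        (fun j => if j + 1 < N then u (j + 1) else κ (mpcTraj f x u N)) N
          = f (mpcTraj f x u N) (κ (mpcTraj f x u N)) := by
      obtain ⟨k, rfl⟩ : ∃ k, N = k + 1 := ⟨N - 1, by omega⟩
      rw [mpcTraj, hshift k (by omega), if_neg (lt_irrefl _)]
    rw [hlast]
    have hQz := hQ.dotProduct_mulVec_nonneg (mpcTraj f x u N)
    have hRz := hR.dotProduct_mulVec_nonneg (κ (mpcTraj f x u N))
    rw [star_trivial] at hQz hRz
    linarith [hκ _ hterm]
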